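/- Let F(x) = ∏_{n=1}^∞ (1 − xⁿ). Then for every complex number x with |x| < 1, one has ( F(x⁸)³ + 3 x⁸ F(x^{72})³ )³ · F(x^{72})³ = F(x^{24})^{12} + 27 x^{24} F(x^{72})^{12}. (This is the cleared-denominator form of the identity (ψ(τ)/φ(τ))³ = (γ(τ)+3)³ = 27 + η(q)^{12}/η(q³)^{12}, asserting that the generalized SYZ map for ℙ¹_{3,3,3} equals the mirror map of the Hesse–Dixon family x³+y³+z³−(γ+3)xyz = 0.) -/

import Mathlib

open scoped BigOperators

/-- The Euler product `F(x) = ∏_{n=1}^∞ (1 − xⁿ)`. -/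
noncomputable def eulerF (x : ℂ) : ℂ := ∏' n : ℕ, (1 - x ^ (n + 1))

/-! Jacobi's identity `F(q)³ = ∑ (-1)ᵏ (2k + 1) q^(k(k+1)/2)` is the limit of a finite version:
after division by `1 - z`, the finite theta product `(1 - z) ∏ (1 - z qʲ)(1 - qʲ / z)` is a
combination of the sums `z⁻ᵏ + ⋯ + zᵏ`, which become `2k + 1` at `z = 1`.

The exponent `k(k+1)/2` is divisible by `3` unless `k ≡ 1 mod 3`, and the terms with `k ≡ 1 mod 3`
add up to `-3q F(q⁹)³`. Hence `A = F(q)³ + 3q F(q⁹)³` is unchanged by `q ↦ ζq` when `ζ³ = 1`, and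
the product of `F(ζq)³ = A - 3ζq F(q⁹)³` over the three cube roots of unity is `A³ - 27q³ F(q⁹)⁹`.
Comparing factors of the Euler products, `F(q⁹)³` times the same product is `F(q³)¹²`.
-/

open Filter Finset Topology

section GaussBinom

variable {R : Type*}

/-- The Gaussian binomial coefficient `[N choose m]_q`, given by a `q`-Pascal rule so that it makes
sense for every `q`, including roots of unity. -/
def gaussBinom [CommSemiring R] (q : R) : ℕ → ℕ → R
  | _, 0 => 1
  | 0, _ + 1 => 0
  | N + 1, m + 1 => q ^ (m + 1) * gaussBinom q N (m + 1) + gaussBinom q N m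

section CommSemiring

variable [CommSemiring R] (q : R)

@[simp]
lemma gaussBinom_zero_right (N : ℕ) : gaussBinom q N 0 = 1 := by
  cases N <;> rfl

lemma gaussBinom_succ_succ (N m : ℕ) :
    gaussBinom q (N + 1) (m + 1) = q ^ (m + 1) * gaussBinom q N (m + 1) + gaussBinom q N m :=
  rfl

lemma gaussBinom_eq_zero_of_lt {N m : ℕ} (h : N < m) : gaussBinom q N m = 0 := by
  induction N generalizing m with
  | zero => obtain _ | m := m <;> [omega; rfl]
  | succ N ih =>
    obtain _ | m := m
    · omega
    · rw [gaussBinom_succ_succ, ih (by omega), ih (by omega), mul_zero, add_zero]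

@[simp]
lemma gaussBinom_self (N : ℕ) : gaussBinom q N N = 1 := by
  induction N with
  | zero => rfl
  | succ N ih =>
    rw [gaussBinom_succ_succ, gaussBinom_eq_zero_of_lt q N.lt_succ_self, ih, mul_zero, zero_add]

lemma pow_mul_pow_mul_gaussBinom_congr {N m a b c d : ℕ} (h : m ≤ N → a + b = c + d) :
    q ^ a * (q ^ b * gaussBinom q N m) = q ^ c * (q ^ d * gaussBinom q N m) := by
  obtain hm | hm := le_or_gt m N
  · rw [← mul_assoc, ← mul_assoc, ← pow_add, ← pow_add, h hm]
  · simp only [gaussBinom_eq_zero_of_lt q hm, mul_zero]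

-- For `N < m` the exponent is truncated to `0`, harmlessly since `gaussBinom q N m = 0`.
lemma gaussBinom_succ_succ' (N m : ℕ) :
    gaussBinom q (N + 1) (m + 1) = gaussBinom q N (m + 1) + q ^ (N - m) * gaussBinom q N m := by
  induction N generalizing m with
  | zero => cases m <;> simp [gaussBinom_succ_succ, gaussBinom_eq_zero_of_lt]
  | succ N ih =>
    obtain _ | m := m
    · calc
        gaussBinom q (N + 2) 1 = q * (gaussBinom q N 1 + q ^ N) + 1 := by
          simp [gaussBinom_succ_succ q (N + 1), ih]
        _ = q * gaussBinom q N 1 + 1 + q ^ (N + 1) := by ring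
        _ = gaussBinom q (N + 1) 1 + q ^ (N + 1) * gaussBinom q (N + 1) 0 := by
          simp [gaussBinom_succ_succ q N]
    · have hpow : q ^ (m + 2) * (q ^ (N - (m + 1)) * gaussBinom q N (m + 1)) =
          q ^ (N - m) * (q ^ (m + 1) * gaussBinom q N (m + 1)) :=
        pow_mul_pow_mul_gaussBinom_congr q (by omega)
      calc
        gaussBinom q (N + 2) (m + 2)
          = q ^ (m + 2) * (gaussBinom q N (m + 2) + q ^ (N - (m + 1)) * gaussBinom q N (m + 1)) +
              (gaussBinom q N (m + 1) + q ^ (N - m) * gaussBinom q N m) := by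
            rw [gaussBinom_succ_succ, ih, ih]
        _ = q ^ (m + 2) * gaussBinom q N (m + 2) + gaussBinom q N (m + 1) +
              q ^ (N - m) * (q ^ (m + 1) * gaussBinom q N (m + 1) + gaussBinom q N m) := by
            rw [mul_add, hpow]
            ring
        _ = gaussBinom q (N + 1) (m + 2) +
              q ^ (N + 1 - (m + 1)) * gaussBinom q (N + 1) (m + 1) := by
            rw [gaussBinom_succ_succ q N, gaussBinom_succ_succ q N, Nat.add_sub_add_right]

lemma gaussBinom_symm (a b : ℕ) : gaussBinom q (a + b) a = gaussBinom q (a + b) b := by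
  induction a generalizing b with
  | zero => simp
  | succ a iha =>
    induction b with
    | zero => simp
    | succ b ihb =>
      have h := iha (b + 1)
      rw [← add_assoc, add_right_comm a] at h
      rw [← add_assoc, gaussBinom_succ_succ, gaussBinom_succ_succ', ihb, ← h,
        show a + 1 + b - b = a + 1 by omega, add_comm]

lemma gaussBinom_add_two (N m : ℕ) :
    gaussBinom q (N + 2) (m + 2) = (1 + q ^ (N + 1)) * gaussBinom q N (m + 1) +
      q ^ (m + 2) * gaussBinom q N (m + 2) + q ^ (N - m) * gaussBinom q N m := by
  have hpow : q ^ (m + 2) * (q ^ (N - (m + 1)) * gaussBinom q N (m + 1)) =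
      q ^ (N + 1) * (q ^ 0 * gaussBinom q N (m + 1)) :=
    pow_mul_pow_mul_gaussBinom_congr q (by omega)
  rw [gaussBinom_succ_succ, gaussBinom_succ_succ', gaussBinom_succ_succ' q N m, mul_add, hpow]
  ring

end CommSemiring

section CommRing

variable [CommRing R] (q : R)

/-- The partial product `∏_{j=1}^n (1 - q^j)` of `eulerF`, that is, the `q`-Pochhammer symbol
`(q; q)_n`. -/
def eulerPartialProd (n : ℕ) : R := ∏ j ∈ range n, (1 - q ^ (j + 1))

@[simp]
lemma eulerPartialProd_zero : eulerPartialProd q 0 = 1 :=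
  prod_range_zero _

lemma eulerPartialProd_succ (n : ℕ) :
    eulerPartialProd q (n + 1) = eulerPartialProd q n * (1 - q ^ (n + 1)) :=
  prod_range_succ _ n

lemma gaussBinom_mul_eulerPartialProd_mul (a b : ℕ) :
    gaussBinom q (a + b) a * eulerPartialProd q a * eulerPartialProd q b =
      eulerPartialProd q (a + b) := by
  induction a generalizing b with
  | zero => simp
  | succ a iha =>
    induction b with
    | zero => simp
    | succ b ihb =>
      have h := iha (b + 1)
      rw [← add_assoc, add_right_comm a, eulerPartialProd_succ q b] at h
      rw [eulerPartialProd_succ q a] at ihb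
      rw [← add_assoc, gaussBinom_succ_succ, eulerPartialProd_succ q (a + 1 + b),
        eulerPartialProd_succ q a, eulerPartialProd_succ q b, add_assoc (a + 1) b, pow_add]
      linear_combination q ^ (a + 1) * (1 - q ^ (b + 1)) * ihb + (1 - q ^ (a + 1)) * h

/-- The coefficient of `z⁻ᵏ` in the finite theta product
`(1 - z) ∏_{j=1}^n (1 - z q^j)(1 - q^j / z)`; the coefficient of `z^(k+1)` is its negative. -/
def finiteThetaCoeff (n k : ℕ) : R :=
  (-1) ^ k * q ^ (k + 1).choose 2 * gaussBinom q (2 * n + 1) (n + 1 + k)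

lemma finiteThetaCoeff_eq_zero_of_lt {n k : ℕ} (h : n < k) : finiteThetaCoeff q n k = 0 := by
  rw [finiteThetaCoeff, gaussBinom_eq_zero_of_lt q (by omega), mul_zero]

lemma finiteThetaCoeff_succ_zero (n : ℕ) :
    finiteThetaCoeff q (n + 1) 0 = (1 + (q ^ (n + 1)) ^ 2) * finiteThetaCoeff q n 0 -
      q ^ (n + 1) * (finiteThetaCoeff q n 1 - finiteThetaCoeff q n 0) := by
  have hsymm : gaussBinom q (2 * n + 1) n = gaussBinom q (2 * n + 1) (n + 1) := by
    rw [show 2 * n + 1 = n + (n + 1) by omega, gaussBinom_symm]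
  have h := gaussBinom_add_two q (2 * n + 1) n
  rw [hsymm, show 2 * n + 1 - n = n + 1 by omega] at h
  simp only [finiteThetaCoeff, show 2 * (n + 1) + 1 = 2 * n + 1 + 2 by ring, add_zero, zero_add, h,
    Nat.choose_self, Nat.choose_succ_self]
  ring

lemma finiteThetaCoeff_succ_succ (n k : ℕ) :
    finiteThetaCoeff q (n + 1) (k + 1) = (1 + (q ^ (n + 1)) ^ 2) * finiteThetaCoeff q n (k + 1) -
      q ^ (n + 1) * (finiteThetaCoeff q n (k + 2) + finiteThetaCoeff q n k) := by
  have hpascal := gaussBinom_add_two q (2 * n + 1) (n + 1 + k)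
  have hchoose (j : ℕ) : (j + 2).choose 2 = (j + 1).choose 2 + (j + 1) := by
    rw [Nat.choose_succ_succ', Nat.choose_one_right, add_comm]
  have hpow : q ^ (k + 1) * (q ^ (2 * n + 1 - (n + 1 + k)) * gaussBinom q (2 * n + 1) (n + 1 + k)) =
      q ^ (n + 1) * (q ^ 0 * gaussBinom q (2 * n + 1) (n + 1 + k)) :=
    pow_mul_pow_mul_gaussBinom_congr q (by omega)
  rw [show n + 1 + k + 1 = n + 1 + (k + 1) by ring,
    show n + 1 + k + 2 = n + 1 + (k + 2) by ring] at hpascal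
  rw [finiteThetaCoeff, show 2 * (n + 1) + 1 = 2 * n + 1 + 2 by ring,
    show n + 1 + 1 + (k + 1) = n + 1 + (k + 2) by ring, hpascal]
  simp only [finiteThetaCoeff, hchoose, pow_add q (Nat.choose _ _)]
  linear_combination (-1) ^ (k + 1) * q ^ (k + 1).choose 2 * hpow

-- The recurrence is multiplication by `(1 - z Q)(1 - Q / z)`, which equals `(1 - Q)²` at `z = 1`.
lemma sum_odd_mul_of_theta_recurrence (Q : R) {b c : ℕ → R}
    (hzero : c 0 = (1 + Q ^ 2) * b 0 - Q * (b 1 - b 0))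
    (hsucc : ∀ k, c (k + 1) = (1 + Q ^ 2) * b (k + 1) - Q * (b (k + 2) + b k)) (N : ℕ) :
    ∑ k ∈ range (N + 1), (2 * k + 1) * c k =
      (1 - Q) ^ 2 * ∑ k ∈ range (N + 1), (2 * k + 1) * b k +
        Q * ((2 * N + 3) * b N - (2 * N + 1) * b (N + 1)) := by
  induction N with
  | zero =>
    simp only [zero_add, sum_range_one, hzero, Nat.cast_zero, mul_zero]
    ring
  | succ N ih =>
    rw [sum_range_succ, ih, hsucc, sum_range_succ _ (N + 1)]
    push_cast
    ring

/-- The `k`-th term of Jacobi's series `∑ (-1)^k (2k + 1) q^(k(k+1)/2)` for the cube of the Euler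
product. -/
def jacobiTerm (k : ℕ) : R := (-1) ^ k * (2 * k + 1) * q ^ (k + 1).choose 2

theorem eulerPartialProd_sq (n : ℕ) :
    eulerPartialProd q n ^ 2 =
      ∑ k ∈ range (n + 1), jacobiTerm q k * gaussBinom q (2 * n + 1) (n + 1 + k) := by
  suffices h : eulerPartialProd q n ^ 2 =
      ∑ k ∈ range (n + 1), (2 * k + 1) * finiteThetaCoeff q n k by
    rw [h]
    refine sum_congr rfl fun k _ => ?_
    rw [finiteThetaCoeff, jacobiTerm]
    ring
  induction n with
  | zero => simp [finiteThetaCoeff]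
  | succ n ih =>
    rw [sum_odd_mul_of_theta_recurrence _ (finiteThetaCoeff_succ_zero q n)
        (finiteThetaCoeff_succ_succ q n), sum_range_succ,
      finiteThetaCoeff_eq_zero_of_lt q n.lt_succ_self,
      finiteThetaCoeff_eq_zero_of_lt q (show n < n + 1 + 1 by omega), ← ih, eulerPartialProd_succ]
    ring

end CommRing
end GaussBinom

section JacobiIdentity

section NormedField

variable {𝕜 : Type*} [NormedField 𝕜] {q : 𝕜} (hq : ‖q‖ < 1)
include hq

lemma norm_pow_lt_one {n : ℕ} (hn : n ≠ 0) : ‖q ^ n‖ < 1 := by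
  rw [norm_pow]
  exact pow_lt_one₀ (norm_nonneg q) hq hn

lemma one_sub_pow_succ_ne_zero (n : ℕ) : 1 - q ^ (n + 1) ≠ 0 := by
  rw [sub_ne_zero]
  intro h
  have hlt := norm_pow_lt_one hq n.succ_ne_zero
  rw [← h, norm_one] at hlt
  exact hlt.false

lemma eulerPartialProd_ne_zero (n : ℕ) : eulerPartialProd q n ≠ 0 :=
  prod_ne_zero_iff.mpr fun j _ => one_sub_pow_succ_ne_zero hq j

lemma gaussBinom_eq_div (a b : ℕ) :
    gaussBinom q (a + b) a =
      eulerPartialProd q (a + b) / (eulerPartialProd q a * eulerPartialProd q b) := by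
  rw [eq_div_iff (mul_ne_zero (eulerPartialProd_ne_zero hq a) (eulerPartialProd_ne_zero hq b)),
    ← mul_assoc, gaussBinom_mul_eulerPartialProd_mul]

end NormedField

lemma norm_jacobiTerm_le {q : ℂ} (hq : ‖q‖ ≤ 1) (k : ℕ) :
    ‖jacobiTerm q k‖ ≤ (2 * k + 1) * ‖q‖ ^ k := by
  have hodd : ‖(2 * k + 1 : ℂ)‖ = 2 * k + 1 := by
    simpa using Complex.norm_natCast (2 * k + 1)
  have hk : k ≤ (k + 1).choose 2 := by
    rw [Nat.choose_succ_succ', Nat.choose_one_right]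
    exact Nat.le_add_right k _
  simp only [jacobiTerm, norm_mul, norm_pow, norm_neg, norm_one, one_pow, one_mul, hodd]
  gcongr ?_ * ?_
  exact pow_le_pow_of_le_one (norm_nonneg q) hq hk

variable {q : ℂ} (hq : ‖q‖ < 1)
include hq

lemma summable_norm_jacobiTerm : Summable fun k => ‖jacobiTerm q k‖ := by
  have hgeom : Summable fun k : ℕ => ‖q‖ ^ k := summable_geometric_of_lt_one (norm_nonneg q) hq
  have hmul : Summable fun k : ℕ => (k : ℝ) ^ 1 * ‖q‖ ^ k :=
    summable_pow_mul_geometric_of_norm_lt_one 1 (by rwa [norm_norm])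
  refine ((hmul.mul_left 2).add hgeom).of_nonneg_of_le (fun _ => norm_nonneg _) fun k => ?_
  exact (norm_jacobiTerm_le hq.le k).trans_eq (by ring)

lemma hasProd_eulerF : HasProd (fun n : ℕ => 1 - q ^ (n + 1)) (eulerF q) :=
  (ModularForm.multipliable_one_sub_pow hq).hasProd

lemma tendsto_eulerPartialProd : Tendsto (eulerPartialProd q) atTop (𝓝 (eulerF q)) :=
  (hasProd_eulerF hq).tendsto_prod_nat

lemma eulerF_ne_zero : eulerF q ≠ 0 := by
  simp only [eulerF, sub_eq_add_neg]
  refine tprod_one_add_ne_zero_of_summable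
    (fun n => by simpa only [sub_eq_add_neg] using one_sub_pow_succ_ne_zero hq n) ?_
  simpa using (summable_nat_add_iff 1).mpr (summable_geometric_of_lt_one (norm_nonneg q) hq)

lemma tendsto_gaussBinom {ι : Type*} {l : Filter ι} {a b : ι → ℕ} (ha : Tendsto a l atTop)
    (hb : Tendsto b l atTop) :
    Tendsto (fun i => gaussBinom q (a i + b i) (a i)) l (𝓝 (eulerF q)⁻¹) := by
  have hF := eulerF_ne_zero hq
  have hlim := tendsto_eulerPartialProd hq
  have hdiv := (hlim.comp (ha.atTop_add_atTop hb)).div ((hlim.comp ha).mul (hlim.comp hb))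
    (mul_ne_zero hF hF)
  rw [div_mul_cancel_left₀ hF] at hdiv
  exact hdiv.congr fun i => (gaussBinom_eq_div hq (a i) (b i)).symm

lemma exists_norm_gaussBinom_le : ∃ C, ∀ N m, ‖gaussBinom q N m‖ ≤ C := by
  have hlim := tendsto_eulerPartialProd hq
  obtain ⟨A, hA⟩ := hlim.norm.bddAbove_range
  obtain ⟨B, hB⟩ := (hlim.inv₀ (eulerF_ne_zero hq)).norm.bddAbove_range
  replace hA n : ‖eulerPartialProd q n‖ ≤ A := hA (Set.mem_range_self n)
  replace hB n : ‖(eulerPartialProd q n)⁻¹‖ ≤ B := hB (Set.mem_range_self n)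
  have hA₀ : 0 ≤ A := (norm_nonneg _).trans (hA 0)
  have hB₀ : 0 ≤ B := (norm_nonneg _).trans (hB 0)
  refine ⟨A * (B * B), fun N m => ?_⟩
  obtain hm | hm := le_or_gt m N
  · obtain ⟨k, rfl⟩ := Nat.exists_eq_add_of_le hm
    rw [gaussBinom_eq_div hq, div_eq_mul_inv, mul_inv, norm_mul, norm_mul]
    gcongr
    exacts [hA _, hB _, hB _]
  · rw [gaussBinom_eq_zero_of_lt q hm, norm_zero]
    positivity

theorem hasSum_jacobiTerm : HasSum (jacobiTerm q) (eulerF q ^ 3) := by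
  obtain ⟨C, hC⟩ := exists_norm_gaussBinom_le hq
  have hfin (n : ℕ) : eulerPartialProd q n ^ 2 =
      ∑' k, jacobiTerm q k * gaussBinom q (2 * n + 1) (n + 1 + k) := by
    rw [eulerPartialProd_sq, tsum_eq_sum]
    intro k hk
    rw [mem_range] at hk
    rw [gaussBinom_eq_zero_of_lt q (by omega), mul_zero]
  have hcoeff (k : ℕ) :
      Tendsto (fun n => gaussBinom q (2 * n + 1) (n + 1 + k)) atTop (𝓝 (eulerF q)⁻¹) := by
    have ha : Tendsto (fun n => n + 1 + k) atTop atTop :=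
      tendsto_atTop_mono (fun n => by rw [id]; omega) tendsto_id
    refine (tendsto_gaussBinom hq ha (tendsto_sub_atTop_nat k)).congr' ?_
    filter_upwards [eventually_ge_atTop k] with n hn
    congr 1
    omega
  have hlim : Tendsto (fun n => eulerPartialProd q n ^ 2) atTop
      (𝓝 (∑' k, jacobiTerm q k * (eulerF q)⁻¹)) := by
    simp only [hfin]
    refine tendsto_tsum_of_dominated_convergence ((summable_norm_jacobiTerm hq).mul_right C)
      (fun k => (hcoeff k).const_mul _) (.of_forall fun n k => ?_)
    rw [norm_mul]
    gcongr
    exact hC _ _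
  have hsq := tendsto_nhds_unique ((tendsto_eulerPartialProd hq).pow 2) hlim
  rw [tsum_mul_right, eq_mul_inv_iff_mul_eq₀ (eulerF_ne_zero hq), ← pow_succ] at hsq
  rw [hsq]
  exact (summable_norm_jacobiTerm hq).of_norm.hasSum

end JacobiIdentity

section Dissection

lemma two_mul_choose_two (k : ℕ) : 2 * (k + 1).choose 2 = k * (k + 1) := by
  have h := Nat.add_one_mul_choose_eq k 1
  rw [Nat.choose_one_right] at h
  linarith

lemma three_dvd_choose_two {k : ℕ} (hk : k % 3 ≠ 1) : 3 ∣ (k + 1).choose 2 := by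
  have h : 3 ∣ k ∨ 3 ∣ k + 1 := by omega
  refine (show Nat.Coprime 3 2 by norm_num).dvd_of_dvd_mul_left ?_
  rw [two_mul_choose_two]
  exact h.elim (dvd_mul_of_dvd_left · _) (dvd_mul_of_dvd_right · _)

lemma choose_two_three_mul_add_two (m : ℕ) :
    (3 * m + 2).choose 2 = 9 * (m + 1).choose 2 + 1 := by
  have h₁ := two_mul_choose_two (3 * m + 1)
  have h₂ := two_mul_choose_two m
  linarith

lemma jacobiTerm_three_mul_add_one {R : Type*} [CommRing R] (q : R) (m : ℕ) :
    jacobiTerm q (3 * m + 1) = -(3 * q) * jacobiTerm (q ^ 9) m := by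
  have hsign : (-1 : R) ^ (3 * m + 1) = -(-1) ^ m := by
    rw [pow_succ, pow_mul]
    norm_num
  simp only [jacobiTerm, choose_two_three_mul_add_two, hsign, pow_succ q (9 * _), pow_mul q 9]
  push_cast
  ring

lemma jacobiTerm_root_mul {R : Type*} [CommRing R] {ζ : R} (hζ : ζ ^ 3 = 1) (q : R) {k : ℕ}
    (hk : k % 3 ≠ 1) : jacobiTerm (ζ * q) k = jacobiTerm q k := by
  obtain ⟨t, ht⟩ := three_dvd_choose_two hk
  rw [jacobiTerm, jacobiTerm, mul_pow, ht, pow_mul ζ, hζ, one_pow, one_mul]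

lemma hasSum_jacobiTerm_dissection {q : ℂ} (hq : ‖q‖ < 1) :
    HasSum (fun k => if k % 3 = 1 then 0 else jacobiTerm q k)
      (eulerF q ^ 3 + 3 * q * eulerF (q ^ 9) ^ 3) := by
  have hq9 : ‖q ^ 9‖ < 1 := norm_pow_lt_one hq (by norm_num)
  have hinj : Function.Injective fun m : ℕ => 3 * m + 1 := fun a b h => by
    simpa using h
  have hone : HasSum (fun k => if k % 3 = 1 then jacobiTerm q k else 0)
      (-(3 * q) * eulerF (q ^ 9) ^ 3) := by
    rw [← hinj.hasSum_iff]
    · convert! (hasSum_jacobiTerm hq9).mul_left (-(3 * q)) using 2 with m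
      simp [jacobiTerm_three_mul_add_one]
    · intro k hk
      exact if_neg fun h => hk ⟨k / 3, by dsimp only; omega⟩
  have hrest := (hasSum_jacobiTerm hq).sub hone
  rw [neg_mul, sub_neg_eq_add] at hrest
  refine hrest.congr_fun fun k => ?_
  split_ifs <;> simp

theorem eulerF_cube_add_root_mul {ζ q : ℂ} (hζ : ζ ^ 3 = 1) (hq : ‖q‖ < 1) :
    eulerF (ζ * q) ^ 3 + 3 * (ζ * q) * eulerF (q ^ 9) ^ 3 =
      eulerF q ^ 3 + 3 * q * eulerF (q ^ 9) ^ 3 := by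
  have hζq : ‖ζ * q‖ < 1 := by
    rwa [norm_mul, Complex.norm_eq_one_of_pow_eq_one hζ three_ne_zero, one_mul]
  have h := hasSum_jacobiTerm_dissection hζq
  rw [mul_pow, pow_mul ζ 3 3, hζ, one_pow, one_mul] at h
  refine h.unique ((hasSum_jacobiTerm_dissection hq).congr_fun fun k => ?_)
  split_ifs with hk
  · rfl
  · exact jacobiTerm_root_mul hζ q hk

end Dissection

section RootProduct

lemma prod_range_sub_pow_mul {R : Type*} [CommRing R] [IsDomain R] {n : ℕ} {ζ : R}
    (hζ : IsPrimitiveRoot ζ n) (hn : 0 < n) (x y : R) :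
    ∏ i ∈ range n, (x - ζ ^ i * y) = x ^ n - y ^ n := by
  have h := congrArg (Polynomial.eval x) (X_pow_sub_C_eq_prod hζ hn (α := y) rfl)
  simpa [Polynomial.eval_prod] using h.symm

lemma prod_one_sub_root_mul_pow {R : Type*} [CommRing R] [IsDomain R] {p : ℕ} (hp : p.Prime)
    {ζ : R} (hζ : IsPrimitiveRoot ζ p) (x : R) (m : ℕ) :
    ∏ i ∈ range p, (1 - (ζ ^ i * x) ^ m) =
      if p ∣ m then (1 - x ^ m) ^ p else 1 - (x ^ p) ^ m := by
  split_ifs with hm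
  · obtain ⟨d, rfl⟩ := hm
    have hroot (i : ℕ) : (ζ ^ i) ^ (p * d) = 1 := by
      rw [← pow_mul, mul_left_comm, pow_mul, hζ.pow_eq_one, one_pow]
    simp only [mul_pow, hroot, one_mul, prod_const, card_range]
  · have hζm : IsPrimitiveRoot (ζ ^ m) p :=
      hζ.pow_of_coprime m ((hp.coprime_iff_not_dvd.mpr hm).symm)
    simpa only [mul_pow, one_pow, pow_right_comm] using prod_range_sub_pow_mul hζm hp.pos 1 (x ^ m)

lemma hasProd_one_sub_pow_of_dvd {q : ℂ} (hq : ‖q‖ < 1) {p : ℕ} (hp : p ≠ 0) :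
    HasProd (fun n : ℕ => if p ∣ n + 1 then 1 - q ^ (n + 1) else 1) (eulerF (q ^ p)) := by
  have hqp : ‖q ^ p‖ < 1 := norm_pow_lt_one hq hp
  have hindex (n : ℕ) : p * (n + 1) - 1 + 1 = p * (n + 1) :=
    Nat.sub_add_cancel (Nat.mul_pos (Nat.pos_of_ne_zero hp) n.succ_pos)
  have hinj : Function.Injective fun n : ℕ => p * (n + 1) - 1 := fun a b h => by
    have h' := congrArg (· + 1) h
    simpa [hindex, hp] using h'
  rw [← hinj.hasProd_iff]
  · convert! hasProd_eulerF hqp using 2 with n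
    simp [hindex, pow_mul]
  · intro n hn
    refine if_neg fun ⟨d, hd⟩ => hn ⟨d - 1, ?_⟩
    obtain _ | d := d
    · simp at hd
    · simp [← hd]

theorem prod_eulerF_root_mul {p : ℕ} (hp : p.Prime) {ζ q : ℂ} (hζ : IsPrimitiveRoot ζ p)
    (hq : ‖q‖ < 1) :
    (∏ i ∈ range p, eulerF (ζ ^ i * q)) * eulerF (q ^ p ^ 2) = eulerF (q ^ p) ^ (p + 1) := by
  have hqp : ‖q ^ p‖ < 1 := norm_pow_lt_one hq hp.ne_zero
  have hroot (i : ℕ) : ‖ζ ^ i * q‖ < 1 := by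
    rwa [norm_mul, norm_pow, hζ.norm'_eq_one hp.ne_zero, one_pow, one_mul]
  have hlhs := (hasProd_prod fun i (_ : i ∈ range p) => hasProd_eulerF (hroot i)).mul
    (hasProd_one_sub_pow_of_dvd hqp hp.ne_zero)
  have hrhs := (hasProd_prod fun _ (_ : _ ∈ range p) =>
    hasProd_one_sub_pow_of_dvd hq hp.ne_zero).mul (hasProd_eulerF hqp)
  rw [prod_const, card_range, ← pow_succ] at hrhs
  rw [sq, pow_mul]
  refine hlhs.unique (hrhs.congr_fun fun n => ?_)
  rw [prod_one_sub_root_mul_pow hp hζ, prod_const, card_range]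
  split_ifs
  · rfl
  · rw [one_pow, one_mul, mul_one]

end RootProduct

theorem eulerF_cubic_identity {q : ℂ} (hq : ‖q‖ < 1) :
    (eulerF q ^ 3 + 3 * q * eulerF (q ^ 9) ^ 3) ^ 3 * eulerF (q ^ 9) ^ 3 =
      eulerF (q ^ 3) ^ 12 + 27 * q ^ 3 * eulerF (q ^ 9) ^ 12 := by
  have hζ := Complex.isPrimitiveRoot_exp 3 three_ne_zero
  set ζ := Complex.exp (2 * Real.pi * Complex.I / (3 : ℕ))
  set A := eulerF q ^ 3 + 3 * q * eulerF (q ^ 9) ^ 3 with hA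
  have hcube (i : ℕ) : eulerF (ζ ^ i * q) ^ 3 = A - ζ ^ i * (3 * q * eulerF (q ^ 9) ^ 3) := by
    have hroot : (ζ ^ i) ^ 3 = 1 := by rw [pow_right_comm, hζ.pow_eq_one, one_pow]
    rw [hA, ← eulerF_cube_add_root_mul hroot hq]
    ring
  have hfactor : ∏ i ∈ range 3, eulerF (ζ ^ i * q) ^ 3 =
      A ^ 3 - (3 * q * eulerF (q ^ 9) ^ 3) ^ 3 := by
    simp only [hcube, prod_range_sub_pow_mul hζ three_pos]
  have hprod := congrArg (· ^ 3) (prod_eulerF_root_mul Nat.prime_three hζ hq)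
  simp only [mul_pow, ← prod_pow, hfactor] at hprod
  norm_num only [← pow_mul] at hprod
  linear_combination hprod

/-- Cleared-denominator form of `(ψ/φ)³ = 27 + η(q)¹²/η(q³)¹²` (with `q = x²⁴`):
`(F(x⁸)³ + 3x⁸F(x⁷²)³)³ · F(x⁷²)³ = F(x²⁴)¹² + 27x²⁴F(x⁷²)¹²` for `|x| < 1`. -/
theorem syz_eq_mirror_map_333 (x : ℂ) (hx : ‖x‖ < 1) :
    (eulerF (x ^ 8) ^ 3 + 3 * x ^ 8 * eulerF (x ^ 72) ^ 3) ^ 3 * eulerF (x ^ 72) ^ 3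
      = eulerF (x ^ 24) ^ 12 + 27 * x ^ 24 * eulerF (x ^ 72) ^ 12 := by
  have hx8 : ‖x ^ 8‖ < 1 := norm_pow_lt_one hx (by norm_num)
  simpa only [← pow_mul, Nat.reduceMul] using eulerF_cubic_identity hx8
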